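/- Let e₀, e₁ denote the standard orthonormal basis of ℂ² and Φ± = (e₀ ⊗ e₀ ± e₁ ⊗ e₁)/√2 ∈ ℂ² ⊗ ℂ². Define Ψ₄ = √(3/4) e₀⊗Φ⁺⊗Φ⁺⊗e₀ + √(1/12) e₀⊗Φ⁺⊗Φ⁻⊗e₁ − √(1/12) e₁⊗Φ⁻⊗Φ⁺⊗e₀ + √(1/12) e₁⊗Φ⁻⊗Φ⁻⊗e₁ in ℂ² ⊗ (ℂ² ⊗ ℂ²) ⊗ (ℂ² ⊗ ℂ²) ⊗ ℂ² (slots U, RA, SB, W, with e₀, e₁ in the U and W slots encoding outcomes + and −). Then the contraction of Ψ₄ against e₁ in the U slot equals √(1/12) Φ⁻ ⊗ (−Φ⁺ ⊗ e₀ + Φ⁻ ⊗ e₁); this vector is nonzero and is NOT of the form χ ⊗ φ for any vector χ ∈ (ℂ²⊗ℂ²) ⊗ (ℂ²⊗ℂ²) and unit vector φ ∈ ℂ² in the W slot. Moreover ⟨e₁⊗Φ⁻⊗Φ⁻⊗e₁, Ψ₄⟩ = √(1/12) ≠ 0, so the outcome in which both Ursula and Wigner obtain '−' has probability 1/12. 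-/

import Mathlib

open scoped TensorProduct

set_option synthInstance.maxHeartbeats 1000000
set_option maxHeartbeats 1000000

noncomputable section

/-- The qubit space `ℂ²`. -/
abbrev Q2 : Type := EuclideanSpace ℂ (Fin 2)

/-- The standard orthonormal basis `e₀, e₁` of `ℂ²`. -/
def e (i : Fin 2) : Q2 := EuclideanSpace.single i 1

/-- `√x` as a complex scalar. -/
def c (x : ℝ) : ℂ := (Real.sqrt x : ℂ)

/-- The linear functional `⟨φ| = ⟪φ, ·⟫` on an inner product space. -/
def bra {H : Type*} [NormedAddCommGroup H] [InnerProductSpace ℂ H] (φ : H) :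
    H →ₗ[ℂ] ℂ :=
  (innerSL ℂ φ).toLinearMap

/-- Contraction `(f ⊗ I) : H ⊗ M →ₗ M` of the first slot against a functional `f`. -/
def contractF {H M : Type*} [AddCommGroup H] [Module ℂ H] [AddCommGroup M]
    [Module ℂ M] (f : H →ₗ[ℂ] ℂ) : H ⊗[ℂ] M →ₗ[ℂ] M :=
  (TensorProduct.lid ℂ M).toLinearMap ∘ₗ TensorProduct.map f LinearMap.id

/-- Contraction `(⟨φ| ⊗ I) : H ⊗ M →ₗ M` against a vector `φ` in the first slot. -/
def contractFirst {H M : Type*} [NormedAddCommGroup H] [InnerProductSpace ℂ H]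
    [AddCommGroup M] [Module ℂ M] (φ : H) : H ⊗[ℂ] M →ₗ[ℂ] M :=
  contractF (bra φ)

/-- Contraction `(I ⊗ ⟨φ|) : M ⊗ H →ₗ M` against a vector `φ` in the last slot. -/
def contractLast {H M : Type*} [NormedAddCommGroup H] [InnerProductSpace ℂ H]
    [AddCommGroup M] [Module ℂ M] (φ : H) : M ⊗[ℂ] H →ₗ[ℂ] M :=
  (TensorProduct.rid ℂ M).toLinearMap ∘ₗ TensorProduct.map LinearMap.id (bra φ)

/-- The functional `f ⊗ g` on a binary tensor product. -/
def braT {H K : Type*} [AddCommGroup H] [Module ℂ H] [AddCommGroup K] [Module ℂ K]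
    (f : H →ₗ[ℂ] ℂ) (g : K →ₗ[ℂ] ℂ) : H ⊗[ℂ] K →ₗ[ℂ] ℂ :=
  LinearMap.mul' ℂ ℂ ∘ₗ TensorProduct.map f g

/-- The Bell state `Φ⁺ = (e₀ ⊗ e₀ + e₁ ⊗ e₁)/√2`. -/
def Φp : Q2 ⊗[ℂ] Q2 := (c 2)⁻¹ • (e 0 ⊗ₜ[ℂ] e 0 + e 1 ⊗ₜ[ℂ] e 1)

/-- The Bell state `Φ⁻ = (e₀ ⊗ e₀ − e₁ ⊗ e₁)/√2`. -/
def Φm : Q2 ⊗[ℂ] Q2 := (c 2)⁻¹ • (e 0 ⊗ₜ[ℂ] e 0 - e 1 ⊗ₜ[ℂ] e 1)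

/-- The functional `⟨Φ⁻| = (⟨e₀| ⊗ ⟨e₀| − ⟨e₁| ⊗ ⟨e₁|)/√2` on `ℂ² ⊗ ℂ²`
(the bra dual to `Φ⁻` with respect to the induced inner product). -/
def braΦm : Q2 ⊗[ℂ] Q2 →ₗ[ℂ] ℂ :=
  (c 2)⁻¹ • (braT (bra (e 0)) (bra (e 0)) - braT (bra (e 1)) (bra (e 1)))

/-- The final state `Ψ₄` of the Frauchiger–Renner protocol (Eq. (3) of the paper),
with slots `U, RA, SB, W` (associated as `U ⊗ (RA ⊗ (SB ⊗ W))`); the basis vectors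
`e₀, e₁` in the `U` and `W` slots encode the outcomes `+` and `−`. -/
def Ψ₄ : Q2 ⊗[ℂ] ((Q2 ⊗[ℂ] Q2) ⊗[ℂ] ((Q2 ⊗[ℂ] Q2) ⊗[ℂ] Q2)) :=
  c (3/4) • (e 0 ⊗ₜ[ℂ] (Φp ⊗ₜ[ℂ] (Φp ⊗ₜ[ℂ] e 0)))
    + c (1/12) • (e 0 ⊗ₜ[ℂ] (Φp ⊗ₜ[ℂ] (Φm ⊗ₜ[ℂ] e 1)))
    + (-(c (1/12))) • (e 1 ⊗ₜ[ℂ] (Φm ⊗ₜ[ℂ] (Φp ⊗ₜ[ℂ] e 0)))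
    + c (1/12) • (e 1 ⊗ₜ[ℂ] (Φm ⊗ₜ[ℂ] (Φm ⊗ₜ[ℂ] e 1)))

/-!
Contracting `RA` against `Φ⁻` turns a factorisation of the relative state as `χ ⊗ φ` into one of
`-Φ⁺ ⊗ e₀ + Φ⁻ ⊗ e₁`. As `Φ⁺, Φ⁻` and `e₀, e₁` are both orthonormal, this vector has Schmidt rank
two and is not a simple tensor. The zero vector is one, so non-vanishing follows as well. The
amplitude of the outcome `(−, −)` is read off from the same relative state.
-/

section SchmidtRank

variable {K M N ι : Type*} [Field K] [AddCommGroup M] [Module K M] [AddCommGroup N] [Module K N]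
  [Fintype ι] {x : ι → M} {y : ι → N}

theorem exists_forall_eq_smul_of_sum_tmul_eq_tmul (hy : LinearIndependent K y) {z : M} {w : N}
    (h : ∑ i, x i ⊗ₜ[K] y i = z ⊗ₜ[K] w) : ∃ a : ι → K, ∀ i, x i = a i • z := by
  classical
  -- The coordinates of a left inverse `g` of `Finsupp.linearCombination K y` are dual to `y`.
  obtain ⟨g, hg⟩ := (Finsupp.linearCombination K y).exists_leftInverse_of_injective
    (LinearMap.ker_eq_bot.mpr hy)
  have hgy (i : ι) : g (y i) = Finsupp.single i 1 := by
    simpa using LinearMap.congr_fun hg (Finsupp.single i 1)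
  refine ⟨fun i ↦ g w i, fun i ↦ ?_⟩
  have hi := congrArg (fun t ↦ TensorProduct.rid K M ((Finsupp.lapply i ∘ₗ g).lTensor M t)) h
  simpa [hgy, Finsupp.single_apply] using hi

theorem sum_tmul_ne_tmul [Nontrivial ι] (hx : LinearIndependent K x) (hy : LinearIndependent K y)
    (z : M) (w : N) : ∑ i, x i ⊗ₜ[K] y i ≠ z ⊗ₜ[K] w := by
  intro h
  obtain ⟨a, ha⟩ := exists_forall_eq_smul_of_sum_tmul_eq_tmul hy h
  obtain ⟨i, j, hij⟩ := exists_pair_ne ι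
  have hdep : a j • x i + -a i • x j = 0 := by
    rw [ha i, ha j]
    module
  have hpair := (LinearIndepOn.pair_iff x hij).mp (hx.linearIndepOn _)
  have hai : a i = 0 := neg_eq_zero.mp (hpair _ _ hdep).2
  exact hx.ne_zero i (by rw [ha i, hai, zero_smul])

end SchmidtRank

section Contraction

variable {H K M : Type*} [AddCommGroup H] [Module ℂ H] [AddCommGroup K] [Module ℂ K]
  [AddCommGroup M] [Module ℂ M]

@[simp]
lemma contractF_tmul (f : H →ₗ[ℂ] ℂ) (x : H) (y : M) : contractF f (x ⊗ₜ[ℂ] y) = f x • y := by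
  simp [contractF]

lemma contractF_assoc_tmul (f : H →ₗ[ℂ] ℂ) (χ : H ⊗[ℂ] K) (y : M) :
    contractF f (TensorProduct.assoc ℂ H K M (χ ⊗ₜ[ℂ] y)) = contractF f χ ⊗ₜ[ℂ] y := by
  induction χ with
  | zero => simp
  | tmul a b => simp [TensorProduct.smul_tmul']
  | add a b ha hb => simp [TensorProduct.add_tmul, ha, hb]

@[simp]
lemma braT_tmul (f : H →ₗ[ℂ] ℂ) (g : K →ₗ[ℂ] ℂ) (x : H) (y : K) :
    braT f g (x ⊗ₜ[ℂ] y) = f x * g y := by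
  simp [braT]

lemma braT_apply (f : H →ₗ[ℂ] ℂ) (g : K →ₗ[ℂ] ℂ) (t : H ⊗[ℂ] K) :
    braT f g t = g (contractF f t) := by
  induction t with
  | zero => simp
  | tmul a b => simp
  | add a b ha hb => simp [ha, hb]

end Contraction

lemma c_ne_zero {x : ℝ} (hx : 0 < x) : c x ≠ 0 :=
  Complex.ofReal_ne_zero.mpr (Real.sqrt_ne_zero'.mpr hx)

lemma c_mul_self {x : ℝ} (hx : 0 ≤ x) : c x * c x = x := by
  rw [c, ← Complex.ofReal_mul, Real.mul_self_sqrt hx]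

lemma conj_c (x : ℝ) : (starRingEnd ℂ) (c x) = c x :=
  Complex.conj_ofReal _

section InnerProductSpace

variable {H K M : Type*} [NormedAddCommGroup H] [InnerProductSpace ℂ H]
  [NormedAddCommGroup K] [InnerProductSpace ℂ K] [AddCommGroup M] [Module ℂ M]

lemma bra_apply (x y : H) : bra x y = inner ℂ x y := rfl

lemma bra_sub (x y : H) : bra (x - y) = bra x - bra y :=
  LinearMap.ext (inner_sub_left x y)

lemma bra_smul (a : ℂ) (x : H) : bra (a • x) = (starRingEnd ℂ) a • bra x :=
  LinearMap.ext fun y ↦ inner_smul_left x y a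

lemma braT_bra_bra (x : H) (y : K) : braT (bra x) (bra y) = bra (x ⊗ₜ[ℂ] y) :=
  TensorProduct.ext' fun a b ↦ by simp [bra_apply]

lemma contractFirst_tmul (x y : H) (m : M) :
    contractFirst x (y ⊗ₜ[ℂ] m) = inner ℂ x y • m := by
  rw [contractFirst, contractF_tmul, bra_apply]

lemma orthonormal_smul_add_smul_sub {u v : H} (h : Orthonormal ℂ ![u, v]) :
    Orthonormal ℂ ![(c 2)⁻¹ • (u + v), (c 2)⁻¹ • (u - v)] := by
  have hc : (c 2)⁻¹ * ((c 2)⁻¹ * 2) = 1 := by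
    rw [← mul_assoc, ← mul_inv, c_mul_self zero_le_two, Complex.ofReal_ofNat,
      inv_mul_cancel₀ two_ne_zero]
  rw [orthonormal_iff_ite] at h ⊢
  simp only [Fin.forall_fin_two, Matrix.cons_val_zero, Matrix.cons_val_one, if_true, one_ne_zero,
    zero_ne_one, if_false] at h ⊢
  obtain ⟨⟨huu, huv⟩, hvu, hvv⟩ := h
  simp only [inner_add_left, inner_add_right, inner_sub_left, inner_sub_right, inner_smul_left,
    inner_smul_right, huu, huv, hvu, hvv, map_inv₀, conj_c]
  norm_num [← two_mul, mul_comm (2 : ℂ), hc]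

end InnerProductSpace

lemma orthonormal_e : Orthonormal ℂ e :=
  EuclideanSpace.orthonormal_single

lemma inner_e_e (i j : Fin 2) : inner ℂ (e i) (e j) = if i = j then 1 else 0 :=
  orthonormal_iff_ite.mp orthonormal_e i j

lemma orthonormal_Φp_Φm : Orthonormal ℂ ![Φp, Φm] :=
  orthonormal_smul_add_smul_sub (by simp [orthonormal_e.norm_eq_one, inner_e_e])

lemma braΦm_eq_bra : braΦm = bra Φm := calc
  braΦm = (starRingEnd ℂ) (c 2)⁻¹ • bra (e 0 ⊗ₜ[ℂ] e 0 - e 1 ⊗ₜ[ℂ] e 1) := by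
    rw [bra_sub, map_inv₀, conj_c, braΦm, braT_bra_bra, braT_bra_bra]
  _ = bra Φm := (bra_smul _ _).symm

lemma braΦm_Φp : braΦm Φp = 0 := by
  rw [braΦm_eq_bra]
  exact orthonormal_Φp_Φm.inner_eq_zero (i := 1) (j := 0) one_ne_zero

lemma braΦm_Φm : braΦm Φm = 1 := by
  rw [braΦm_eq_bra]
  exact inner_self_eq_one_of_norm_eq_one (orthonormal_Φp_Φm.norm_eq_one 1)

lemma contractFirst_e_one_Ψ₄ :
    contractFirst (e 1) Ψ₄ = c (1/12) • (Φm ⊗ₜ[ℂ] ((-Φp) ⊗ₜ[ℂ] e 0 + Φm ⊗ₜ[ℂ] e 1)) := by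
  simp only [Ψ₄, map_add, map_smul, contractFirst_tmul, inner_e_e, one_ne_zero, if_true, if_false,
    TensorProduct.tmul_add, TensorProduct.neg_tmul, TensorProduct.tmul_neg]
  module

lemma neg_Φp_tmul_add_Φm_tmul_ne_tmul (χ : Q2 ⊗[ℂ] Q2) (φ : Q2) :
    (-Φp) ⊗ₜ[ℂ] e 0 + Φm ⊗ₜ[ℂ] e 1 ≠ χ ⊗ₜ[ℂ] φ := by
  have hΦ : LinearIndependent ℂ ![-Φp, Φm] :=
    LinearIndependent.pair_neg_left_iff.mpr orthonormal_Φp_Φm.linearIndependent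
  simpa [Fin.sum_univ_two] using sum_tmul_ne_tmul hΦ orthonormal_e.linearIndependent χ φ

lemma contractFirst_e_one_Ψ₄_ne_assoc_tmul (χ : (Q2 ⊗[ℂ] Q2) ⊗[ℂ] (Q2 ⊗[ℂ] Q2)) (φ : Q2) :
    contractFirst (e 1) Ψ₄ ≠
      TensorProduct.assoc ℂ (Q2 ⊗[ℂ] Q2) (Q2 ⊗[ℂ] Q2) Q2 (χ ⊗ₜ[ℂ] φ) := by
  intro h
  refine neg_Φp_tmul_add_Φm_tmul_ne_tmul ((c (1/12))⁻¹ • contractF braΦm χ) φ ?_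
  rw [← TensorProduct.smul_tmul', ← contractF_assoc_tmul, ← h, contractFirst_e_one_Ψ₄, map_smul,
    contractF_tmul, braΦm_Φm, one_smul, inv_smul_smul₀ (c_ne_zero (by norm_num))]

lemma braT_e_one_Φm_Φm_e_one_Ψ₄ :
    braT (bra (e 1)) (braT braΦm (braT braΦm (bra (e 1)))) Ψ₄ = c (1/12) := by
  rw [braT_apply, ← contractFirst, contractFirst_e_one_Ψ₄]
  simp [braΦm_Φp, braΦm_Φm, bra_apply, inner_e_e, orthonormal_e.norm_eq_one]

/-- Eq. (12) of the paper: the contraction of `Ψ₄` against `e₁` in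
Ursula's slot equals `√(1/12) Φ⁻ ⊗ (−Φ⁺ ⊗ e₀ + Φ⁻ ⊗ e₁)`; this vector is nonzero
and does not factor as `χ ⊗ φ` with `φ` a unit vector in Wigner's slot (Wigner's
relative state given Ursula's outcome `−` is not pure); moreover
`⟨e₁ ⊗ Φ⁻ ⊗ Φ⁻ ⊗ e₁, Ψ₄⟩ = √(1/12) ≠ 0`, so the outcome in which both Ursula and
Wigner obtain `−` has probability `1/12`. -/
theorem frauchiger_renner_direct_relative_state :
    (contractFirst (e 1) Ψ₄ =
      c (1/12) • (Φm ⊗ₜ[ℂ] ((-Φp) ⊗ₜ[ℂ] e 0 + Φm ⊗ₜ[ℂ] e 1))) ∧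
    contractFirst (e 1) Ψ₄ ≠ (0 : (Q2 ⊗[ℂ] Q2) ⊗[ℂ] ((Q2 ⊗[ℂ] Q2) ⊗[ℂ] Q2)) ∧
    (¬ ∃ (χ : (Q2 ⊗[ℂ] Q2) ⊗[ℂ] (Q2 ⊗[ℂ] Q2)) (φ : Q2), ‖φ‖ = 1 ∧
      contractFirst (e 1) Ψ₄ =
        TensorProduct.assoc ℂ (Q2 ⊗[ℂ] Q2) (Q2 ⊗[ℂ] Q2) Q2 (χ ⊗ₜ[ℂ] φ)) ∧
    (braT (bra (e 1)) (braT braΦm (braT braΦm (bra (e 1)))) Ψ₄ = c (1/12) ∧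
      c (1/12) ≠ 0) := by
  refine ⟨contractFirst_e_one_Ψ₄, fun h ↦ ?_, ?_, braT_e_one_Φm_Φm_e_one_Ψ₄,
    c_ne_zero (by norm_num)⟩
  · exact contractFirst_e_one_Ψ₄_ne_assoc_tmul 0 0 (by simp [h])
  · rintro ⟨χ, φ, -, h⟩
    exact contractFirst_e_one_Ψ₄_ne_assoc_tmul χ φ h

end
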